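/- arXiv:2203.05261 — 2 statements merged into one kernel-verified Lean document; each statement's English description precedes it below -/
import Mathlib

section
/- Let d ≥ 1, let f : ℝ^d → ℂ be an affine function and let v_1, …, v_{d+1} ∈ ℝ^d be affinely independent with d-simplex s = conv(v_1, …, v_{d+1}). Then (vol(s) / ((d+2)(d+1))) · Σ_{k=1}^{d+1} |f(v_k)|² ≤ ∫_s |f(x)|² dx ≤ (vol(s) / (d+1)) · Σ_{k=1}^{d+1} |f(v_k)|². -/
open MeasureTheory

namespace SimplexAux

variable {d : ℕ}

lemma affine_add_smul_sub (h : (Fin d → ℝ) →ᵃ[ℝ] ℝ) (x p q : Fin d → ℝ) (c : ℝ) :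
    h (x + c • (p - q)) = h x + c * (h p - h q) := by
  have h1 := h.map_vadd x (c • (p - q))
  have h2 := h.linearMap_vsub p q
  simp only [vadd_eq_add, vsub_eq_sub] at h1 h2
  rw [add_comm x, h1, map_smul, h2, smul_eq_mul, add_comm]

lemma coord_step (b : AffineBasis (Fin (d + 1)) ℝ (Fin d → ℝ)) (i j k : Fin (d + 1))
    (x : Fin d → ℝ) (c : ℝ) :
    b.coord k (x + c • (b i - b j)) =
      b.coord k x + c * ((if k = i then 1 else 0) - (if k = j then 1 else 0)) := by
  rw [affine_add_smul_sub, b.coord_apply, b.coord_apply]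

/-- moves the vertex `j` to the midpoint of the edge `i j`. -/
noncomputable def half (b : AffineBasis (Fin (d + 1)) ℝ (Fin d → ℝ)) (i j : Fin (d + 1))
    (x : Fin d → ℝ) : Fin d → ℝ := x + (b.coord j x / 2) • (b i - b j)

lemma half_image (b : AffineBasis (Fin (d + 1)) ℝ (Fin d → ℝ)) {i j : Fin (d + 1)}
    (hij : i ≠ j) :
    half b i j '' (convexHull ℝ (Set.range b)) =
      convexHull ℝ (Set.range b) ∩ {x | b.coord j x ≤ b.coord i x} := by
  rw [b.convexHull_eq_nonneg_coord]
  ext y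
  simp only [Set.mem_image, Set.mem_inter_iff, Set.mem_ofPred_eq]
  constructor
  · rintro ⟨x, hx, rfl⟩
    refine ⟨fun k => ?_, ?_⟩
    · have := hx k
      have := hx j
      rw [half, coord_step]
      split_ifs with h1 h2 h2
      · exact absurd (h1.symm.trans h2) hij
      · linarith
      · subst h2; linarith
      · linarith
    · have := hx i
      rw [half, coord_step, coord_step]
      simp [hij, hij.symm]
      linarith
  · rintro ⟨hy, hle⟩
    refine ⟨y + (- b.coord j y) • (b i - b j), fun k => ?_, ?_⟩
    · have := hy k
      have := hy j
      rw [coord_step]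
      split_ifs with h1 h2 h2
      · exact absurd (h1.symm.trans h2) hij
      · subst h1; linarith
      · subst h2; linarith
      · linarith
    · rw [half, coord_step]
      simp only [if_neg hij.symm, if_true]
      rw [add_assoc, ← add_smul]
      have : -b.coord j y + (b.coord j y + -b.coord j y * (0 - 1)) / 2 = 0 := by ring
      rw [this, zero_smul, add_zero]

lemma half_inj (b : AffineBasis (Fin (d + 1)) ℝ (Fin d → ℝ)) {i j : Fin (d + 1)}
    (hij : i ≠ j) : Function.Injective (half b i j) := by
  intro x y h
  have h1 := congrArg (b.coord j) h
  rw [half, half, coord_step, coord_step] at h1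
  simp only [if_neg hij.symm, if_true] at h1
  have h2 : b.coord j x = b.coord j y := by linarith
  rw [half, half, h2] at h
  exact add_right_cancel h

lemma integral_half (b : AffineBasis (Fin (d + 1)) ℝ (Fin d → ℝ)) {i j : Fin (d + 1)}
    (hij : i ≠ j) (s : Set (Fin d → ℝ)) (hs : MeasurableSet s) (F : (Fin d → ℝ) → ℝ) :
    ∫ x in half b i j '' s, F x = 1 / 2 * ∫ x in s, F (half b i j x) := by
  set L : (Fin d → ℝ) →ₗ[ℝ] (Fin d → ℝ) :=
    LinearMap.transvection (b.coord j).linear ((1 / 2 : ℝ) • (b i - b j)) with hL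
  have hlin : (b.coord j).linear (b i - b j) = -1 := by
    have := (b.coord j).linearMap_vsub (b i) (b j)
    simp only [vsub_eq_sub] at this
    rw [this, b.coord_apply, b.coord_apply]
    simp [hij.symm]
  have hdet : L.det = 1 / 2 := by
    rw [hL, LinearMap.transvection.det, map_smul, hlin]
    norm_num
  have hder : ∀ x, HasFDerivAt (half b i j) (LinearMap.toContinuousLinearMap L) x := by
    intro x
    have : half b i j = fun x => LinearMap.toContinuousLinearMap L x +
        (b.coord j 0 / 2) • (b i - b j) := by
      funext x
      have h1 := (b.coord j).map_vadd 0 x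
      simp only [vadd_eq_add, add_zero] at h1
      simp only [LinearMap.coe_toContinuousLinearMap', hL, LinearMap.transvection.apply]
      rw [half, h1, smul_smul, add_assoc, ← add_smul]
      congr 2
      ring
    rw [this]
    exact (ContinuousLinearMap.hasFDerivAt _).add_const _
  rw [integral_image_eq_integral_abs_det_fderiv_smul volume hs
    (fun x _ => (hder x).hasFDerivWithinAt) (half_inj b hij).injOn]
  have : (LinearMap.toContinuousLinearMap L).det = 1 / 2 := by
    rw [← hdet]; rfl
  simp only [this, smul_eq_mul]
  rw [integral_const_mul]
  norm_num

lemma coord_cont (b : AffineBasis (Fin (d + 1)) ℝ (Fin d → ℝ)) (i : Fin (d + 1)) :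
    Continuous (b.coord i) := (b.coord i).continuous_of_finiteDimensional

lemma hull_compact (b : AffineBasis (Fin (d + 1)) ℝ (Fin d → ℝ)) :
    IsCompact (convexHull ℝ (Set.range b)) :=
  (Set.finite_range b).isCompact_convexHull ℝ

lemma null_diag (b : AffineBasis (Fin (d + 1)) ℝ (Fin d → ℝ)) {i j : Fin (d + 1)}
    (hij : i ≠ j) : volume {x | b.coord i x = b.coord j x} = 0 := by
  let A : AffineSubspace ℝ (Fin d → ℝ) :=
    (AffineSubspace.mk' (0 : ℝ) ⊥).comap (b.coord i - b.coord j)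
  have hA : (A : Set (Fin d → ℝ)) = {x | b.coord i x = b.coord j x} := by
    ext x
    simp [A, sub_eq_zero]
  rw [← hA]
  apply Measure.addHaar_affineSubspace
  intro h
  have : b i ∈ (A : Set (Fin d → ℝ)) := by rw [h]; trivial
  rw [hA] at this
  simp [b.coord_apply, hij.symm] at this

lemma split (b : AffineBasis (Fin (d + 1)) ℝ (Fin d → ℝ)) {i j : Fin (d + 1)}
    (hij : i ≠ j) (F : (Fin d → ℝ) → ℝ) (hF : Continuous F) :
    ∫ x in convexHull ℝ (Set.range b), F x =
      1 / 2 * (∫ x in convexHull ℝ (Set.range b), F (half b i j x)) +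
      1 / 2 * ∫ x in convexHull ℝ (Set.range b), F (half b j i x) := by
  have hm := (hull_compact b).measurableSet
  have hint : IntegrableOn F (convexHull ℝ (Set.range b)) :=
    hF.continuousOn.integrableOn_compact (hull_compact b)
  rw [← integral_half b hij _ hm, ← integral_half b hij.symm _ hm, half_image b hij,
    half_image b hij.symm]
  have hm2 : MeasurableSet {x | b.coord i x ≤ b.coord j x} :=
    (isClosed_le (coord_cont b i) (coord_cont b j)).measurableSet
  rw [← setIntegral_union₀ _ (hm.inter hm2).nullMeasurableSet
    (hint.mono_set Set.inter_subset_left) (hint.mono_set Set.inter_subset_left)]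
  · congr 2
    ext x
    simp only [Set.mem_union, Set.mem_inter_iff, Set.mem_ofPred_eq]
    have := le_total (b.coord i x) (b.coord j x)
    tauto
  · refine measure_mono_null ?_ (null_diag b hij)
    rintro x ⟨⟨_, h1⟩, ⟨_, h2⟩⟩
    exact le_antisymm h2 h1

/-- second moments of the barycentric coordinates -/
noncomputable def M (b : AffineBasis (Fin (d + 1)) ℝ (Fin d → ℝ)) (i j : Fin (d + 1)) : ℝ :=
  ∫ x in convexHull ℝ (Set.range b), b.coord i x * b.coord j x

lemma M_int (b : AffineBasis (Fin (d + 1)) ℝ (Fin d → ℝ)) (i j : Fin (d + 1)) :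
    IntegrableOn (fun x => b.coord i x * b.coord j x) (convexHull ℝ (Set.range b)) :=
  ((coord_cont b i).mul (coord_cont b j)).continuousOn.integrableOn_compact (hull_compact b)

lemma M_combo (b : AffineBasis (Fin (d + 1)) ℝ (Fin d → ℝ)) (i j : Fin (d + 1)) (p q r : ℝ) :
    ∫ x in convexHull ℝ (Set.range b), (p * (b.coord i x * b.coord i x) +
      q * (b.coord i x * b.coord j x) + r * (b.coord j x * b.coord j x)) =
    p * M b i i + q * M b i j + r * M b j j := by
  have h1 := (M_int b i i).const_mul p
  have h2 := (M_int b i j).const_mul q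
  have h3 := (M_int b j j).const_mul r
  rw [integral_add (by exact h1.add h2) h3, integral_add h1 h2]
  simp only [integral_const_mul, M]

lemma M_rel (b : AffineBasis (Fin (d + 1)) ℝ (Fin d → ℝ)) {i j : Fin (d + 1)}
    (hij : i ≠ j) : M b i j = M b i i / 2 ∧ M b i i = M b j j := by
  have e1 : ∀ x, b.coord i (half b i j x) = b.coord i x + b.coord j x / 2 := by
    intro x; rw [half, coord_step]; simp [hij]
  have e2 : ∀ x, b.coord j (half b i j x) = b.coord j x / 2 := by
    intro x; rw [half, coord_step]; simp [hij.symm]; ring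
  have e3 : ∀ x, b.coord j (half b j i x) = b.coord j x + b.coord i x / 2 := by
    intro x; rw [half, coord_step]; simp [hij.symm]
  have e4 : ∀ x, b.coord i (half b j i x) = b.coord i x / 2 := by
    intro x; rw [half, coord_step]; simp [hij]; ring
  have s1 := split b hij (fun x => b.coord i x * b.coord j x)
    ((coord_cont b i).mul (coord_cont b j))
  have s2 := split b hij (fun x => b.coord i x * b.coord i x)
    ((coord_cont b i).mul (coord_cont b i))
  have s3 := split b hij (fun x => b.coord j x * b.coord j x)
    ((coord_cont b j).mul (coord_cont b j))
  simp only [e1, e2, e3, e4] at s1 s2 s3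
  have a1 := M_combo b i j 0 (1/2) (1/4)
  have a2 := M_combo b i j (1/4) (1/2) 0
  have a3 := M_combo b i j 1 1 (1/4)
  have a4 := M_combo b i j (1/4) 0 0
  have a5 := M_combo b i j 0 0 (1/4)
  have a6 := M_combo b i j (1/4) 1 1
  have c1 : M b i j = 1/2 * (0 * M b i i + (1/2) * M b i j + (1/4) * M b j j) +
      1/2 * ((1/4) * M b i i + (1/2) * M b i j + 0 * M b j j) := by
    rw [← a1, ← a2]; unfold M; rw [s1]; congr 3 <;> (funext x; ring)
  have c2 : M b i i = 1/2 * (1 * M b i i + 1 * M b i j + (1/4) * M b j j) +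
      1/2 * ((1/4) * M b i i + 0 * M b i j + 0 * M b j j) := by
    rw [← a3, ← a4]; unfold M; rw [s2]; congr 3 <;> (funext x; ring)
  have c3 : M b j j = 1/2 * (0 * M b i i + 0 * M b i j + (1/4) * M b j j) +
      1/2 * ((1/4) * M b i i + 1 * M b i j + 1 * M b j j) := by
    rw [← a5, ← a6]; unfold M; rw [s3]; congr 3 <;> (funext x; ring)
  constructor <;> linarith

lemma M_eq (b : AffineBasis (Fin (d + 1)) ℝ (Fin d → ℝ)) (i j : Fin (d + 1)) :
    M b i j = M b 0 0 / 2 * (1 + if i = j then 1 else 0) := by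
  have h0 : ∀ i, M b i i = M b 0 0 := by
    intro i
    by_cases h : i = 0
    · rw [h]
    · exact (M_rel b h).2
  by_cases h : i = j
  · subst h
    rw [h0]; simp; ring
  · rw [(M_rel b h).1, h0]; simp [h]

lemma real_moment (b : AffineBasis (Fin (d + 1)) ℝ (Fin d → ℝ)) (c : Fin (d + 1) → ℝ) :
    ∫ x in convexHull ℝ (Set.range b), (∑ k, b.coord k x * c k) ^ 2 =
      M b 0 0 / 2 * ((∑ k, c k) ^ 2 + ∑ k, c k ^ 2) := by
  have h1 : ∀ x, (∑ k, b.coord k x * c k) ^ 2 =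
      ∑ k, ∑ l, (c k * c l) * (b.coord k x * b.coord l x) := by
    intro x
    rw [sq, Finset.sum_mul_sum]
    refine Finset.sum_congr rfl fun k _ => Finset.sum_congr rfl fun l _ => by ring
  simp only [h1]
  rw [integral_finsetSum _ fun k _ => integrable_finsetSum _ fun l _ =>
    (M_int b k l).const_mul _]
  have h2 : ∀ k, ∫ x in convexHull ℝ (Set.range b),
      ∑ l, (c k * c l) * (b.coord k x * b.coord l x) = ∑ l, (c k * c l) * M b k l := by
    intro k
    rw [integral_finsetSum _ fun l _ => (M_int b k l).const_mul _]
    simp only [integral_const_mul, M]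
  have h3 := M_eq b
  generalize M b 0 0 / 2 = β at h3 ⊢
  simp only [h2, h3, mul_add, mul_one, mul_ite, mul_zero, Finset.sum_add_distrib,
    Finset.sum_ite_eq, Finset.mem_univ, if_true]
  rw [sq, Finset.sum_mul_sum, Finset.mul_sum, Finset.mul_sum]
  congr 1
  · refine Finset.sum_congr rfl fun k _ => ?_
    rw [Finset.mul_sum]
    exact Finset.sum_congr rfl fun l _ => by ring
  · exact Finset.sum_congr rfl fun l _ => by ring

lemma vol_eq (b : AffineBasis (Fin (d + 1)) ℝ (Fin d → ℝ)) :
    (volume (convexHull ℝ (Set.range b))).toReal =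
      M b 0 0 / 2 * ((d + 2) * (d + 1)) := by
  have := real_moment b (fun _ => 1)
  simp only [mul_one, b.sum_coord_apply_eq_one] at this
  simp at this
  rw [Measure.real] at this
  rw [this]; ring

end SimplexAux

open SimplexAux in
/-- two-sided bound for the squared-`L₂` integral of a complex affine function over
a `d`-simplex in terms of its values at the vertices. -/
theorem integral_sq_norm_affine_simplex_bounds (d : ℕ) (hd : 1 ≤ d)
    (a : Fin d → ℂ) (b : ℂ) (f : (Fin d → ℝ) → ℂ)
    (hf : ∀ x, f x = (∑ i, a i * (x i : ℂ)) + b)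
    (v : Fin (d + 1) → (Fin d → ℝ)) (hv : AffineIndependent ℝ v) :
    (volume (convexHull ℝ (Set.range v))).toReal / ((d + 2) * (d + 1)) *
        (∑ k, ‖f (v k)‖ ^ 2) ≤
      ∫ x in convexHull ℝ (Set.range v), ‖f x‖ ^ 2 ∧
    ∫ x in convexHull ℝ (Set.range v), ‖f x‖ ^ 2 ≤
      (volume (convexHull ℝ (Set.range v))).toReal / (d + 1) * (∑ k, ‖f (v k)‖ ^ 2) := by
  have htop : affineSpan ℝ (Set.range v) = ⊤ := by
    rw [hv.affineSpan_eq_top_iff_card_eq_finrank_add_one]; simp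
  obtain ⟨B, hB⟩ : ∃ B : AffineBasis (Fin (d + 1)) ℝ (Fin d → ℝ), ⇑B = v :=
    ⟨⟨v, hv, htop⟩, rfl⟩
  subst hB
  have hfx : ∀ x, f x = ∑ k, (B.coord k x : ℂ) * f (B k) := by
    intro x
    have hx : ∀ i, x i = ∑ k, B.coord k x * B k i := by
      intro i
      have := congrFun (B.linear_combination_coord_eq_self x) i
      rw [← this]
      simp
    have h1 : (∑ k, (B.coord k x : ℂ)) = 1 := by
      exact_mod_cast B.sum_coord_apply_eq_one x
    simp only [hf, mul_add, Finset.sum_add_distrib]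
    rw [← Finset.sum_mul, h1, one_mul]
    congr 1
    simp only [Finset.mul_sum]
    rw [Finset.sum_comm]
    refine Finset.sum_congr rfl fun i _ => ?_
    rw [hx i]
    push_cast
    rw [Finset.mul_sum]
    exact Finset.sum_congr rfl fun k _ => by ring
  have hnorm : ∀ z : ℂ, ‖z‖ ^ 2 = z.re ^ 2 + z.im ^ 2 := by
    intro z; rw [Complex.sq_norm, Complex.normSq_apply]; ring
  have hI : ∀ c : Fin (d + 1) → ℝ, IntegrableOn (fun x => (∑ k, B.coord k x * c k) ^ 2)
      (convexHull ℝ (Set.range B)) := fun c =>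
    ((continuous_finsetSum _ fun k _ => (coord_cont B k).mul continuous_const).pow 2
      ).continuousOn.integrableOn_compact (hull_compact B)
  have hre : ∀ x, (f x).re = ∑ k, B.coord k x * (f (B k)).re := by
    intro x; rw [hfx x]; simp
  have him : ∀ x, (f x).im = ∑ k, B.coord k x * (f (B k)).im := by
    intro x; rw [hfx x]; simp
  have key : ∫ x in convexHull ℝ (Set.range B), ‖f x‖ ^ 2 =
      M B 0 0 / 2 * ((∑ k, (f (B k)).re) ^ 2 + ∑ k, (f (B k)).re ^ 2) +
      M B 0 0 / 2 * ((∑ k, (f (B k)).im) ^ 2 + ∑ k, (f (B k)).im ^ 2) := by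
    rw [← real_moment, ← real_moment, ← integral_add (hI _) (hI _)]
    congr 1
    funext x
    rw [hnorm, hre, him]
  have hS : ∑ k, ‖f (B k)‖ ^ 2 = ∑ k, (f (B k)).re ^ 2 + ∑ k, (f (B k)).im ^ 2 := by
    rw [← Finset.sum_add_distrib]
    exact Finset.sum_congr rfl fun k _ => hnorm _
  have hM : 0 ≤ M B 0 0 / 2 :=
    div_nonneg (integral_nonneg fun x => mul_self_nonneg _) (by norm_num)
  have cs : ∀ c : Fin (d + 1) → ℝ, (∑ k, c k) ^ 2 ≤ (d + 1) * ∑ k, c k ^ 2 := by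
    intro c
    have := sq_sum_le_card_mul_sum_sq (s := Finset.univ) (f := c)
    simpa using this
  have c1 := cs fun k => (f (B k)).re
  have c2 := cs fun k => (f (B k)).im
  have p1 := sq_nonneg (∑ k, (f (B k)).re)
  have p2 := sq_nonneg (∑ k, (f (B k)).im)
  rw [key, vol_eq, hS]
  have hd1 : (d : ℝ) + 1 ≠ 0 := by positivity
  have hd2 : (d : ℝ) + 2 ≠ 0 := by positivity
  rw [mul_div_cancel_right₀ _ (mul_ne_zero hd2 hd1), ← mul_assoc (M B 0 0 / 2),
    mul_div_cancel_right₀ _ hd1, ← mul_add, mul_assoc (M B 0 0 / 2)]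
  constructor
  · apply mul_le_mul_of_nonneg_left _ hM
    linarith
  · apply mul_le_mul_of_nonneg_left _ hM
    linarith
end

section
/- Let d ≥ 1 and let D : ℝ^d → ℝ be the Cartesian linear box spline. Then Σ_{k ∈ ℤ^d} (∫_{ℝ^d} D(x) D(x − k) dx) · e^{2πi(k_1+⋯+k_d)/(d+1)} = 1/(d+2), where the sum has only finitely many nonzero terms. (This is the value ĝ(ω₀) of the discrete-time Fourier transform of the sampled autocorrelation of D at ω₀ = −(2π/(d+1))·(1,…,1), and it shows that the lower Riesz bound 1/√(d+2) of the shifts of D is attained.) -/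
open MeasureTheory

/-- The Cartesian linear box spline on `ℝ^d`:
`D(x) = Σ_{ε ∈ {0,1}^{d+1}} (−1)^{|ε|} max(0, min_{1 ≤ i ≤ d} (x_i − ε_i − ε_{d+1}))`. -/
noncomputable def boxSplineD (d : ℕ) (x : Fin d → ℝ) : ℝ :=
  ∑ ε : Fin (d + 1) → Fin 2,
    (-1 : ℝ) ^ (∑ i, (ε i : ℕ)) *
      max 0 (⨅ i : Fin d, (x i - ((ε (Fin.castSucc i) : ℕ) : ℝ) - ((ε (Fin.last d) : ℕ) : ℝ)))

noncomputable def bsH (u : ℝ) : ℝ := if 0 ≤ u then 1 else 0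
noncomputable def bsInd (u : ℝ) : ℝ := bsH u - bsH (u - 1)

lemma bsInd_eq (u : ℝ) : bsInd u = (Set.Ico (0:ℝ) 1).indicator 1 u := by
  unfold bsInd bsH
  simp only [Set.indicator, Set.mem_Ico, Pi.one_apply]
  split_ifs <;> first | (norm_num; done) | (exfalso; grind)

lemma bsH_measurable : Measurable bsH := by
  unfold bsH
  exact Measurable.ite measurableSet_Ici measurable_const measurable_const

lemma bsInd_measurable : Measurable bsInd := by
  unfold bsInd
  exact bsH_measurable.sub (bsH_measurable.comp (measurable_id.sub_const 1))

noncomputable def bsμ : Measure ℝ := volume.restrict (Set.Ioc 0 1)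

instance : IsFiniteMeasure bsμ := by unfold bsμ; infer_instance

lemma bs_len (m : ℝ) : max 0 m - max 0 (m - 1) = ∫ s, bsH (m - s) ∂bsμ := by
  have h : (fun s => bsH (m - s)) = (Set.Iic m).indicator 1 := by
    ext s; simp [bsH, Set.indicator]
  rw [h, integral_indicator_one measurableSet_Iic, bsμ, measureReal_restrict_apply measurableSet_Iic,
    Set.inter_comm, Set.Ioc_inter_Iic, Real.volume_real_Ioc]
  grind

lemma bsH_iInf (d : ℕ) (hd : 1 ≤ d) (y : Fin d → ℝ) (s : ℝ) :
    bsH ((⨅ i, y i) - s) = ∏ i, bsH (y i - s) := by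
  have : Nonempty (Fin d) := ⟨⟨0, hd⟩⟩
  have h : 0 ≤ (⨅ i, y i) - s ↔ ∀ i, 0 ≤ y i - s := by
    simp only [sub_nonneg]
    exact le_ciInf_iff (Set.finite_range y).bddBelow
  unfold bsH
  by_cases hc : ∀ i, 0 ≤ y i - s
  · rw [if_pos (h.2 hc), Finset.prod_eq_one]
    intro i _; rw [if_pos (hc i)]
  · rw [if_neg (fun hh => hc (h.1 hh))]
    push Not at hc
    obtain ⟨i, hi⟩ := hc
    rw [Finset.prod_eq_zero (Finset.mem_univ i)]
    rw [if_neg (not_le.2 hi)]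

lemma bs_prod_integrable (d : ℕ) (f : Fin d → ℝ → ℝ) (hf : ∀ i, Measurable (f i))
    (hb : ∀ i s, ‖f i s‖ ≤ 1) : Integrable (fun s => ∏ i, f i s) bsμ := by
  refine Integrable.of_bound (C := 1) ?_ ?_
  · exact (Finset.measurable_prod _ (fun i _ => hf i)).aestronglyMeasurable
  · refine Filter.Eventually.of_forall fun s => ?_
    rw [norm_prod]
    exact Finset.prod_le_one (fun i _ => norm_nonneg _) (fun i _ => hb i s)

lemma boxSplineD_eq (d : ℕ) (hd : 1 ≤ d) (x : Fin d → ℝ) :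
    boxSplineD d x = ∫ t, ∏ i, bsInd (x i - t) ∂bsμ := by
  have : Nonempty (Fin d) := ⟨⟨0, hd⟩⟩
  have h1 : ∀ t, ∏ i, bsInd (x i - t) =
      ∑ ε : Fin d → Fin 2, (-1 : ℝ) ^ (∑ i, (ε i : ℕ)) * ∏ i, bsH (x i - ((ε i : ℕ):ℝ) - t) := by
    intro t
    have : ∀ i, bsInd (x i - t) = ∑ e : Fin 2, (-1 : ℝ) ^ (e : ℕ) * bsH (x i - ((e : ℕ) : ℝ) - t) := by
      intro i
      simp [bsInd]
      rw [sub_right_comm]; ring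
    simp_rw [this]
    rw [Finset.prod_univ_sum]
    simp [Finset.prod_mul_distrib, Finset.prod_pow_eq_pow_sum]
  simp_rw [h1]
  rw [integral_finsetSum]
  · simp_rw [integral_const_mul, ← bsH_iInf d hd, ← bs_len]
    unfold boxSplineD
    rw [← (Fin.snocEquiv (fun _ => Fin 2)).sum_comp, Fintype.sum_prod_type]
    simp only [Fin.sum_univ_two, ← Finset.sum_add_distrib]
    refine Finset.sum_congr rfl fun ε _ => ?_
    have h2 : (⨅ i, (x i - ((ε i : ℕ) : ℝ) - 1)) = (⨅ i, (x i - ((ε i : ℕ) : ℝ))) - 1 :=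
      (ciInf_sub (Set.finite_range _).bddBelow 1).symm
    simp [Fin.snocEquiv, Fin.sum_univ_castSucc, pow_succ, h2]
    ring
  · intro ε _
    refine Integrable.const_mul ?_ _
    refine bs_prod_integrable d _ (fun i => ?_) ?_
    · exact bsH_measurable.comp (measurable_const.sub measurable_id)
    · intro i s; unfold bsH; split_ifs <;> simp

noncomputable def bsHat (u : ℝ) : ℝ := max 0 (1 - |u|)

lemma bs_hat_int (t s k : ℝ) : ∫ x, bsInd (x - t) * bsInd (x - k - s) = bsHat (t - s - k) := by
  have h : (fun x => bsInd (x - t) * bsInd (x - k - s)) =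
      (Set.Ico (max t (k+s)) (min (t+1) (k+s+1))).indicator 1 := by
    ext x
    simp only [bsInd_eq, Set.indicator, Set.mem_Ico, Pi.one_apply, max_le_iff, lt_min_iff]
    split_ifs <;> first | (norm_num; done) | (exfalso; grind)
  rw [h, integral_indicator_one measurableSet_Ico, Real.volume_real_Ico, bsHat]
  grind

lemma bsInd_bound (u : ℝ) : 0 ≤ bsInd u ∧ bsInd u ≤ 1 := by
  rw [bsInd_eq]; simp only [Set.indicator]; split_ifs <;> simp

lemma bs_autocorr (d : ℕ) (hd : 1 ≤ d) (k : Fin d → ℤ) :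
    ∫ x : Fin d → ℝ, boxSplineD d x * boxSplineD d (fun i => x i - (k i : ℝ)) =
    ∫ p, ∏ i, bsHat (p.1 - p.2 - k i) ∂(bsμ.prod bsμ) := by
  simp_rw [boxSplineD_eq d hd, ← integral_prod_mul]
  rw [integral_integral_swap]
  · simp_rw [← Finset.prod_mul_distrib]
    refine integral_congr_ae (Filter.Eventually.of_forall fun p => ?_)
    simp only
    rw [integral_fintype_prod_volume_eq_prod (fun i x => bsInd (x - p.1) * bsInd (x - k i - p.2))]
    simp_rw [bs_hat_int]
  · have hI : Integrable (fun x : Fin d → ℝ => (Set.Icc (0 : Fin d → ℝ) 2).indicator (1 : (Fin d → ℝ) → ℝ) x) := by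
      rw [integrable_indicator_iff measurableSet_Icc]
      exact integrableOn_const (by exact (isCompact_Icc.measure_lt_top).ne)
    have hm : Measurable (Function.uncurry fun (x : Fin d → ℝ) (p : ℝ × ℝ) =>
        (∏ i, bsInd (x i - p.1)) * ∏ i, bsInd (x i - k i - p.2)) := by
      refine Measurable.mul ?_ ?_
      · refine Finset.measurable_prod _ fun i _ => bsInd_measurable.comp ?_
        fun_prop
      · refine Finset.measurable_prod _ fun i _ => bsInd_measurable.comp ?_
        fun_prop
    refine Integrable.mono' (hI.comp_fst (bsμ.prod bsμ)) hm.aestronglyMeasurable ?_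
    have h01 : ∀ᵐ q ∂((volume : Measure (Fin d → ℝ)).prod (bsμ.prod bsμ)), q.2.1 ∈ Set.Ioc (0:ℝ) 1 := by
      have h0 : ∀ᵐ t ∂bsμ, t ∈ Set.Ioc (0:ℝ) 1 := ae_restrict_mem measurableSet_Ioc
      have h1 : ∀ᵐ p ∂(bsμ.prod bsμ), p.1 ∈ Set.Ioc (0:ℝ) 1 := Measure.quasiMeasurePreserving_fst.ae h0
      exact Measure.quasiMeasurePreserving_snd.ae h1
    filter_upwards [h01] with ⟨x, p⟩ hp
    simp only [Function.uncurry] at hp ⊢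
    have hle : ∀ y : Fin d → ℝ, 0 ≤ ∏ i, bsInd (y i) ∧ ∏ i, bsInd (y i) ≤ 1 := fun y =>
      ⟨Finset.prod_nonneg fun i _ => (bsInd_bound _).1,
       Finset.prod_le_one (fun i _ => (bsInd_bound _).1) (fun i _ => (bsInd_bound _).2)⟩
    have a1 := hle (fun i => x i - p.1)
    have a2 := hle (fun i => x i - k i - p.2)
    rw [Real.norm_of_nonneg (mul_nonneg a1.1 a2.1)]
    by_cases hx : x ∈ Set.Icc (0 : Fin d → ℝ) 2
    · rw [Set.indicator_of_mem hx]
      exact mul_le_one₀ a1.2 a2.1 a2.2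
    · rw [Set.indicator_of_notMem hx]
      have : ∃ i, bsInd (x i - p.1) = 0 := by
        by_contra hcon
        push Not at hcon
        apply hx
        have : ∀ i, 0 ≤ x i ∧ x i ≤ 2 := by
          intro i
          have := hcon i
          rw [bsInd_eq, Set.indicator_apply_ne_zero] at this
          have := this.1
          simp only [Set.mem_Ico, Set.mem_Ioc] at this hp
          constructor <;> linarith
        exact ⟨fun i => (this i).1, fun i => (this i).2⟩
      obtain ⟨i, hi⟩ := this
      rw [Finset.prod_eq_zero (Finset.mem_univ i) hi, zero_mul]

lemma bsHat_zero (t s : ℝ) (ht : t ∈ Set.Ioc (0:ℝ) 1) (hs : s ∈ Set.Ioc (0:ℝ) 1) (k : ℤ)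
    (hk : k ∉ Finset.Icc (-1 : ℤ) 1) : bsHat (t - s - k) = 0 := by
  unfold bsHat
  apply max_eq_left
  rw [Finset.mem_Icc, not_and_or] at hk
  obtain ⟨h1, h2⟩ := ht
  obtain ⟨h3, h4⟩ := hs
  have : 1 ≤ |t - s - k| := by
    rw [le_abs]
    rcases hk with hk | hk
    · left
      have : (k:ℝ) ≤ -2 := by exact_mod_cast (by omega : k ≤ -2)
      linarith
    · right
      have : (2:ℝ) ≤ k := by exact_mod_cast (by omega : 2 ≤ k)
      linarith
  linarith

lemma bs_ae : ∀ᵐ p ∂(bsμ.prod bsμ), p.1 ∈ Set.Ioc (0:ℝ) 1 ∧ p.2 ∈ Set.Ioc (0:ℝ) 1 := by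
  have h0 : ∀ᵐ t ∂bsμ, t ∈ Set.Ioc (0:ℝ) 1 := ae_restrict_mem measurableSet_Ioc
  exact (Measure.quasiMeasurePreserving_fst.ae h0).and (Measure.quasiMeasurePreserving_snd.ae h0)

lemma bs_autocorr_zero (d : ℕ) (k : Fin d → ℤ)
    (hk : k ∉ Fintype.piFinset (fun _ : Fin d => Finset.Icc (-1 : ℤ) 1)) :
    ∫ p, ∏ i, bsHat (p.1 - p.2 - k i) ∂(bsμ.prod bsμ) = 0 := by
  rw [Fintype.mem_piFinset] at hk
  push Not at hk
  obtain ⟨i, hi⟩ := hk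
  apply integral_eq_zero_of_ae
  filter_upwards [bs_ae] with p hp
  exact Finset.prod_eq_zero (Finset.mem_univ i) (bsHat_zero _ _ hp.1 hp.2 _ hi)

lemma bsHat_cont : Continuous bsHat := by unfold bsHat; fun_prop

lemma bs_int_bdd (f : ℝ × ℝ → ℂ) (hf : Continuous f) : Integrable f (bsμ.prod bsμ) := by
  unfold bsμ
  rw [Measure.prod_restrict]
  have : IntegrableOn f (Set.Icc 0 1 ×ˢ Set.Icc 0 1) (volume.prod volume) :=
    hf.continuousOn.integrableOn_compact (isCompact_Icc.prod isCompact_Icc)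
  exact this.mono_set (Set.prod_mono Set.Ioc_subset_Icc_self Set.Ioc_subset_Icc_self)

noncomputable def bsG (z : ℂ) (u : ℝ) : ℂ := ∑ k ∈ Finset.Icc (-1 : ℤ) 1, (bsHat (u - k) : ℂ) * z ^ k

lemma bsG_cont (z : ℂ) : Continuous (bsG z) := by
  unfold bsG
  have := bsHat_cont
  fun_prop

lemma bs_sum (d : ℕ) (z : ℂ) (hz : z ≠ 0) :
    ∑ k ∈ Fintype.piFinset (fun _ : Fin d => Finset.Icc (-1 : ℤ) 1),
      ((∫ p, ∏ i, bsHat (p.1 - p.2 - k i) ∂(bsμ.prod bsμ) : ℝ) : ℂ) * z ^ (∑ i, k i) =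
    ∫ p, bsG z (p.1 - p.2) ^ d ∂(bsμ.prod bsμ) := by
  have h : ∀ p : ℝ × ℝ, bsG z (p.1 - p.2) ^ d =
      ∑ k ∈ Fintype.piFinset (fun _ : Fin d => Finset.Icc (-1 : ℤ) 1),
        ((∏ i, bsHat (p.1 - p.2 - k i) : ℝ) : ℂ) * z ^ (∑ i, k i) := by
    intro p
    have : bsG z (p.1 - p.2) ^ d = ∏ _i : Fin d, bsG z (p.1 - p.2) := by simp
    rw [this]
    unfold bsG
    rw [Finset.prod_univ_sum]
    refine Finset.sum_congr rfl fun k _ => ?_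
    rw [Finset.prod_mul_distrib, Complex.ofReal_prod]
    congr 1
    induction (Finset.univ : Finset (Fin d)) using Finset.cons_induction_on with
    | empty => simp
    | cons a s ha ih => rw [Finset.prod_cons, Finset.sum_cons, ih, zpow_add₀ hz]
  simp_rw [h]
  rw [integral_finsetSum]
  · simp_rw [integral_mul_const, integral_complex_ofReal]
  · intro k _
    apply bs_int_bdd
    have := bsHat_cont
    fun_prop

lemma bsG_pos (z : ℂ) (u : ℝ) (h0 : 0 ≤ u) (h1 : u ≤ 1) : bsG z u = 1 - u * (1 - z) := by
  have : Finset.Icc (-1 : ℤ) 1 = {-1, 0, 1} := by decide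
  have a1 : bsHat (u + 1) = 0 := by unfold bsHat; grind
  have a2 : bsHat u = 1 - u := by unfold bsHat; grind
  have a3 : bsHat (u - 1) = u := by unfold bsHat; grind
  simp [bsG, this, a1, a2, a3]
  ring

lemma bsG_neg (z : ℂ) (u : ℝ) (h0 : 0 ≤ u) (h1 : u ≤ 1) : bsG z (-u) = 1 - u * (1 - z⁻¹) := by
  have : Finset.Icc (-1 : ℤ) 1 = {-1, 0, 1} := by decide
  have a1 : bsHat (-u + 1) = u := by unfold bsHat; grind
  have a2 : bsHat (-u) = 1 - u := by unfold bsHat; grind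
  have a3 : bsHat (-u - 1) = 0 := by unfold bsHat; grind
  simp [bsG, this, a1, a2, a3]
  ring

lemma bs_pow_int (w : ℂ) (hw : w ≠ 0) (n : ℕ) (a : ℝ) :
    ∫ v in (0:ℝ)..a, (1 - (v:ℂ) * w) ^ n = (1 - (1 - a * w) ^ (n + 1)) / (w * (n + 1)) := by
  have hn : (n : ℂ) + 1 ≠ 0 := by exact_mod_cast Nat.succ_ne_zero n
  have hd : ∀ v ∈ Set.uIcc 0 a, HasDerivAt (fun v : ℝ => -(1 - (v:ℂ) * w) ^ (n + 1) / (w * (n + 1)))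
      ((1 - (v:ℂ) * w) ^ n) v := by
    intro v _
    have h1 : HasDerivAt (fun v : ℝ => 1 - (v:ℂ) * w) (-(1 * w)) v :=
      ((Complex.ofRealCLM.hasDerivAt (x := v)).mul_const w).const_sub 1
    have h2 := ((h1.pow (n + 1)).neg).div_const (w * (n + 1))
    have he : (1 - (v:ℂ) * w) ^ n =
        -(((n + 1 : ℕ) : ℂ) * (1 - (v:ℂ) * w) ^ (n + 1 - 1) * -(1 * w)) / (w * (n + 1)) := by
      push_cast
      field_simp
    rw [he]
    exact h2
  rw [intervalIntegral.integral_eq_sub_of_hasDerivAt hd]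
  · simp; ring
  · exact (by fun_prop : Continuous fun v : ℝ => (1 - (v:ℂ) * w) ^ n).intervalIntegrable _ _

lemma bs_final (d : ℕ) (z : ℂ) (hz0 : z ≠ 0) (hz1 : z ≠ 1) (hz : z ^ (d + 1) = 1) :
    ∫ p, bsG z (p.1 - p.2) ^ d ∂(bsμ.prod bsμ) = 1 / ((d : ℂ) + 2) := by
  have hc := bsG_cont z
  have hw : 1 - z ≠ 0 := sub_ne_zero.2 (Ne.symm hz1)
  have hw' : 1 - z⁻¹ ≠ 0 := sub_ne_zero.2 (by simpa [eq_comm] using hz1)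
  have hn : (d : ℂ) + 1 ≠ 0 := by exact_mod_cast Nat.succ_ne_zero d
  have hn2 : (d : ℂ) + 2 ≠ 0 := by exact_mod_cast Nat.succ_ne_zero (d + 1)
  rw [integral_prod _ (bs_int_bdd _ (by fun_prop))]
  unfold bsμ
  simp_rw [← intervalIntegral.integral_of_le (zero_le_one' ℝ)]
  have key : ∀ t ∈ Set.uIcc (0:ℝ) 1, ∫ s in (0:ℝ)..1, bsG z (t - s) ^ d =
      (1 - (1 - (t:ℂ) * (1 - z)) ^ (d + 1)) / ((1 - z) * (d + 1)) +
      (1 - (1 - ((1 - t : ℝ):ℂ) * (1 - z⁻¹)) ^ (d + 1)) / ((1 - z⁻¹) * (d + 1)) := by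
    intro t ht
    rw [Set.uIcc_of_le zero_le_one] at ht
    obtain ⟨h0, h1⟩ := ht
    rw [← bs_pow_int _ hw, ← bs_pow_int _ hw']
    rw [← intervalIntegral.integral_add_adjacent_intervals (b := t)
      ((by fun_prop : Continuous fun s : ℝ => bsG z (t - s) ^ d).intervalIntegrable _ _)
      ((by fun_prop : Continuous fun s : ℝ => bsG z (t - s) ^ d).intervalIntegrable _ _)]
    congr 1
    · rw [intervalIntegral.integral_comp_sub_left (fun u => bsG z u ^ d) t]
      simp only [sub_self, sub_zero]
      refine intervalIntegral.integral_congr fun u hu => ?_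
      rw [Set.uIcc_of_le h0] at hu
      rw [bsG_pos z u hu.1 (hu.2.trans h1)]
    · have : ∀ s, bsG z (t - s) = (fun u => bsG z (-u)) (s - t) := by intro s; simp
      simp_rw [this]
      rw [intervalIntegral.integral_comp_sub_right (fun u => bsG z (-u) ^ d) t]
      simp only [sub_self]
      refine intervalIntegral.integral_congr fun u hu => ?_
      rw [Set.uIcc_of_le (by linarith)] at hu
      rw [bsG_neg z u hu.1 (by linarith [hu.2])]
  rw [intervalIntegral.integral_congr key]
  have e2 : ∀ w : ℂ, w ≠ 0 → ((1:ℂ) - w) ^ (d + 1) = 1 →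
      ∫ t in (0:ℝ)..1, (1 - (1 - (t:ℂ) * w) ^ (d + 1)) / (w * (d + 1)) = 1 / (w * (d + 2)) := by
    intro w hw hw1
    rw [intervalIntegral.integral_div, intervalIntegral.integral_sub
      (by simp) ((by fun_prop : Continuous fun t : ℝ => (1 - (t:ℂ) * w) ^ (d + 1)).intervalIntegrable _ _),
      bs_pow_int w hw, pow_succ _ (d + 1)]
    simp only [Complex.ofReal_one, one_mul, hw1]
    have hn3 : (d : ℂ) + 1 + 1 ≠ 0 := by rw [add_assoc]; norm_num; exact hn2
    simp
    field_simp
    ring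
  rw [intervalIntegral.integral_add
    ((by fun_prop : Continuous fun t : ℝ => (1 - (1 - (t:ℂ) * (1 - z)) ^ (d + 1)) / ((1 - z) * (d + 1))).intervalIntegrable _ _)
    ((by fun_prop : Continuous fun t : ℝ => (1 - (1 - ((1 - t : ℝ):ℂ) * (1 - z⁻¹)) ^ (d + 1)) / ((1 - z⁻¹) * (d + 1))).intervalIntegrable _ _),
    intervalIntegral.integral_comp_sub_left
      (fun t : ℝ => (1 - (1 - (t:ℂ) * (1 - z⁻¹)) ^ (d + 1)) / ((1 - z⁻¹) * (d + 1))) 1]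
  simp only [sub_self, sub_zero]
  rw [e2 _ hw (by simpa using hz), e2 _ hw' (by simp [hz])]
  have h3 : 1 - z⁻¹ = -(1 - z) / z := by field_simp; ring
  rw [h3]
  field_simp
  ring

/-- the discrete-time Fourier transform of the sampled autocorrelation of the
Cartesian linear box spline, evaluated at `ω₀ = −(2π/(d+1))·(1,…,1)`, equals `1/(d+2)`:
`Σ_{k ∈ ℤ^d} (∫ D(x) D(x−k) dx) e^{2πi|k|/(d+1)} = 1/(d+2)`, the sum having finitely many
nonzero terms. -/
theorem boxSpline_autocorrelation_dtft_value (d : ℕ) (hd : 1 ≤ d) :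
    {k : Fin d → ℤ |
        (∫ x : Fin d → ℝ, boxSplineD d x * boxSplineD d (fun i => x i - (k i : ℝ))) ≠ 0}.Finite ∧
    ∑ᶠ k : Fin d → ℤ,
        ((∫ x : Fin d → ℝ, boxSplineD d x * boxSplineD d (fun i => x i - (k i : ℝ)) : ℝ) : ℂ) *
          Complex.exp (2 * Real.pi * Complex.I * ((∑ i, k i : ℤ) : ℂ) / ((d : ℂ) + 1)) =
      1 / ((d : ℂ) + 2) := by
  simp_rw [bs_autocorr d hd]
  have hsub : ∀ k : Fin d → ℤ, (∫ p, ∏ i, bsHat (p.1 - p.2 - k i) ∂(bsμ.prod bsμ)) ≠ 0 →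
      k ∈ Fintype.piFinset (fun _ : Fin d => Finset.Icc (-1 : ℤ) 1) := by
    intro k hk
    by_contra h
    exact hk (bs_autocorr_zero d k h)
  refine ⟨(Finset.finite_toSet _).subset hsub, ?_⟩
  have hprim := Complex.isPrimitiveRoot_exp (d + 1) (Nat.succ_ne_zero d)
  set z := Complex.exp (2 * Real.pi * Complex.I / ((d + 1 : ℕ) : ℂ)) with hzdef
  have hexp : ∀ m : ℤ, Complex.exp (2 * Real.pi * Complex.I * (m : ℂ) / ((d : ℂ) + 1)) = z ^ m := by
    intro m
    rw [hzdef, ← Complex.exp_int_mul]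
    congr 1
    push_cast
    ring
  simp_rw [hexp]
  rw [finsum_eq_sum_of_support_subset (s := Fintype.piFinset (fun _ : Fin d => Finset.Icc (-1 : ℤ) 1))]
  · rw [bs_sum d z (Complex.exp_ne_zero _)]
    exact bs_final d z (Complex.exp_ne_zero _) (hprim.ne_one (by omega)) hprim.pow_eq_one
  · intro k hk
    apply hsub k
    intro h0
    apply hk
    simp only
    rw [h0]
    simp
end
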